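/- arXiv:1903.02563 — 3 statements merged into one kernel-verified Lean document; each statement's English description precedes it below -/
import Mathlib

section
/- Let n ≥ 1, let v : Fin n → ℂⁿ be an orthonormal basis consisting of eigenvectors of a Hermitian matrix A with real eigenvalues α : Fin n → ℝ (A·v_j = α_j·v_j), let w : Fin n → ℂⁿ be an orthonormal basis, let S ⊆ Fin n, let F := Σ_{l∈S} w_l·w_lᴴ, and let ρ be any n×n complex matrix. With q(j,k,l) := ⟨w_l, v_j⟩·⟨v_j, ρ·v_k⟩·⟨v_k, w_l⟩, the following two identities hold: Tr(F·A·ρ·A) = Σ_{j∈Fin n, k∈Fin n, l∈S} q(j,k,l)·α_j·α_k, and Tr(F·A·ρ) = Σ_{j∈Fin n, k∈Fin n, l∈S} q(j,k,l)·α_j. (Hence the postselected quantum Fisher information can be expressed entirely in terms of the doubly extended Kirkwood–Dirac distribution.) -/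
open Matrix

lemma kd_trace_aux {n : ℕ} (v w : Fin n → (Fin n → ℂ)) (S : Finset (Fin n))
    (ρ : Matrix (Fin n) (Fin n) ℂ) (b c : Fin n → ℂ) :
    Matrix.trace ((∑ l ∈ S, vecMulVec (w l) (star (w l))) *
        (∑ j, b j • vecMulVec (v j) (star (v j))) * ρ *
        (∑ k, c k • vecMulVec (v k) (star (v k))))
      = ∑ j : Fin n, ∑ k : Fin n, ∑ l ∈ S,
        (star (w l) ⬝ᵥ v j) * (star (v j) ⬝ᵥ ρ.mulVec (v k)) * (star (v k) ⬝ᵥ w l)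
          * b j * c k := by
  have key : ∀ l j k, Matrix.trace (vecMulVec (w l) (star (w l)) *
      (b j • vecMulVec (v j) (star (v j))) * ρ * (c k • vecMulVec (v k) (star (v k))))
      = (star (w l) ⬝ᵥ v j) * (star (v j) ⬝ᵥ ρ.mulVec (v k)) * (star (v k) ⬝ᵥ w l)
          * b j * c k := by
    intro l j k
    rw [Matrix.mul_smul, Matrix.mul_smul, Matrix.smul_mul, Matrix.smul_mul,
      Matrix.vecMulVec_mul_vecMulVec, Matrix.vecMulVec_mul, Matrix.vecMulVec_mul_vecMulVec,
      Matrix.trace_smul, Matrix.trace_smul, Matrix.trace_vecMulVec, Matrix.smul_vecMul,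
      smul_dotProduct, dotProduct_smul, ← Matrix.dotProduct_mulVec,
      dotProduct_comm (w l) (star (v k))]
    simp only [smul_eq_mul]
    ring
  simp only [← key, Finset.sum_mul, Finset.mul_sum, Matrix.trace_sum]
  rw [Finset.sum_comm]

/-- The traces appearing in the postselected quantum Fisher information decompose in terms of
the doubly extended Kirkwood–Dirac quasiprobability distribution. -/
theorem trace_decomposition_kd
    {n : ℕ}
    (A : Matrix (Fin n) (Fin n) ℂ) (hA : A.IsHermitian)
    (v : Fin n → (Fin n → ℂ)) (α : Fin n → ℝ)
    (hv_on : ∀ j k, star (v j) ⬝ᵥ v k = if j = k then 1 else 0)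
    (hv_eig : ∀ j, A.mulVec (v j) = (α j : ℂ) • v j)
    (w : Fin n → (Fin n → ℂ))
    (hw_on : ∀ j k, star (w j) ⬝ᵥ w k = if j = k then 1 else 0)
    (S : Finset (Fin n))
    (F : Matrix (Fin n) (Fin n) ℂ)
    (hF : F = ∑ l ∈ S, vecMulVec (w l) (star (w l)))
    (ρ : Matrix (Fin n) (Fin n) ℂ)
    (q : Fin n → Fin n → Fin n → ℂ)
    (hq : ∀ j k l, q j k l
        = (star (w l) ⬝ᵥ v j) * (star (v j) ⬝ᵥ ρ.mulVec (v k)) * (star (v k) ⬝ᵥ w l)) :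
    Matrix.trace (F * A * ρ * A)
        = ∑ j : Fin n, ∑ k : Fin n, ∑ l ∈ S, q j k l * (α j : ℂ) * (α k : ℂ) ∧
      Matrix.trace (F * A * ρ)
        = ∑ j : Fin n, ∑ k : Fin n, ∑ l ∈ S, q j k l * (α j : ℂ) := by
  have hone : (∑ j, vecMulVec (v j) (star (v j))) = (1 : Matrix (Fin n) (Fin n) ℂ) := by
    let V : Matrix (Fin n) (Fin n) ℂ := Matrix.of fun i j => v j i
    have h1 : Vᴴ * V = 1 := by
      ext j k
      rw [Matrix.one_apply, ← hv_on j k]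
      rfl
    have h2 : V * Vᴴ = 1 := mul_eq_one_comm.mp h1
    rw [← h2]
    ext i k
    rw [Matrix.sum_apply]
    rfl
  have hAs : A = ∑ j, (α j : ℂ) • vecMulVec (v j) (star (v j)) := by
    conv_lhs => rw [← Matrix.mul_one A, ← hone, Finset.mul_sum]
    refine Finset.sum_congr rfl fun j _ => ?_
    rw [Matrix.mul_vecMulVec, hv_eig, Matrix.smul_vecMulVec]
  have hone' : (∑ j, (1 : ℂ) • vecMulVec (v j) (star (v j)))
      = (1 : Matrix (Fin n) (Fin n) ℂ) := by simpa using hone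
  constructor
  · have h := kd_trace_aux v w S ρ (fun j => (α j : ℂ)) (fun j => (α j : ℂ))
    rw [← hAs, ← hF] at h
    simpa only [hq] using h
  · have h := kd_trace_aux v w S ρ (fun j => (α j : ℂ)) (fun _ => 1)
    rw [← hAs, ← hF, hone', Matrix.mul_one] at h
    simpa only [hq, mul_one] using h
end

section
/- Let v, w : Fin n → ℂⁿ be two orthonormal bases such that ⟨w_l, v_j⟩ ≠ 0 for all j, l, and let ρ be any n×n complex matrix. Define q(j,k,l) := ⟨w_l, v_j⟩·⟨v_j, ρ·v_k⟩·⟨v_k, w_l⟩. Then ρ = Σ_{j,k,l} q(j,k,l) · (v_j·w_lᴴ) / ⟨w_l, v_j⟩, i.e., the matrix ρ is fully reconstructed from its doubly extended Kirkwood–Dirac quasiprobability distribution. -/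
open Matrix

/-- A matrix `ρ` is fully reconstructed from its doubly extended Kirkwood–Dirac
quasiprobability distribution. -/
theorem kd_reconstruction
    {n : ℕ}
    (v w : Fin n → (Fin n → ℂ))
    (hv_on : ∀ j k, star (v j) ⬝ᵥ v k = if j = k then 1 else 0)
    (hw_on : ∀ j k, star (w j) ⬝ᵥ w k = if j = k then 1 else 0)
    (hnz : ∀ j l, star (w l) ⬝ᵥ v j ≠ 0)
    (ρ : Matrix (Fin n) (Fin n) ℂ)
    (q : Fin n → Fin n → Fin n → ℂ)
    (hq : ∀ j k l, q j k l
        = (star (w l) ⬝ᵥ v j) * (star (v j) ⬝ᵥ ρ.mulVec (v k)) * (star (v k) ⬝ᵥ w l)) :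
    ρ = ∑ j : Fin n, ∑ k : Fin n, ∑ l : Fin n,
        (q j k l / (star (w l) ⬝ᵥ v j)) • vecMulVec (v j) (star (w l)) := by
  have key : ∀ u : Fin n → (Fin n → ℂ),
      (∀ j k, star (u j) ⬝ᵥ u k = if j = k then 1 else 0) →
      (Matrix.of u)ᵀ * ((Matrix.of u)ᵀ)ᴴ = 1 := by
    intro u hu
    rw [mul_eq_one_comm]
    ext j k
    rw [Matrix.one_apply, ← hu j k]
    simp [Matrix.mul_apply, dotProduct]
  have hV := key v hv_on
  have hW := key w hw_on
  set V : Matrix (Fin n) (Fin n) ℂ := (Matrix.of v)ᵀ with hVd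
  set W : Matrix (Fin n) (Fin n) ℂ := (Matrix.of w)ᵀ with hWd
  have hX : ∀ j k, star (v j) ⬝ᵥ ρ.mulVec (v k) = (Vᴴ * (ρ * V)) j k := by
    intro j k
    simp [Matrix.mul_apply, dotProduct, Matrix.mulVec, hVd]
  have hY : ∀ k l, star (v k) ⬝ᵥ w l = (Vᴴ * W) k l := by
    intro j k
    simp [Matrix.mul_apply, dotProduct, hVd, hWd]
  have h1 : ρ = V * ((Vᴴ * (ρ * V)) * ((Vᴴ * W) * Wᴴ)) := by
    calc ρ = (V * Vᴴ) * ρ * (V * Vᴴ) * (W * Wᴴ) := by rw [hV, hW]; simp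
      _ = _ := by simp only [Matrix.mul_assoc]
  refine h1.trans ?_
  have hc : ∀ j k l, q j k l / (star (w l) ⬝ᵥ v j)
      = (Vᴴ * (ρ * V)) j k * (Vᴴ * W) k l := by
    intro j k l
    rw [hq, hX, hY]
    field_simp [hnz j l]
  simp only [hc]
  generalize Vᴴ * (ρ * V) = X
  generalize Vᴴ * W = Y
  ext r s
  simp only [Matrix.sum_apply, Matrix.smul_apply, Matrix.vecMulVec_apply, Matrix.mul_apply,
    Finset.mul_sum]
  refine Finset.sum_congr rfl fun j _ => Finset.sum_congr rfl fun k _ =>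
    Finset.sum_congr rfl fun l _ => ?_
  simp [hVd, hWd]
  ring
end

section
/- Let A be an n×n complex Hermitian matrix and F an n×n orthogonal projection with A·F = F·A. Then there exist an orthonormal basis v : Fin n → ℂⁿ and reals α : Fin n → ℝ such that A·v_j = α_j·v_j for every j and each v_j satisfies F·v_j = v_j or F·v_j = 0; moreover, for every positive semidefinite n×n matrix ρ, taking both bases of the doubly extended Kirkwood–Dirac distribution equal to v, every quasiprobability q(j,k,l) := ⟨v_l, v_j⟩·⟨v_j, ρ·v_k⟩·⟨v_k, v_l⟩ is a nonnegative real number (it equals ⟨v_j, ρ·v_j⟩ when j = k = l and 0 otherwise). (If the generator commutes with the postselection projector, the doubly extended Kirkwood–Dirac quasiprobability distribution can be expressed as real and nonnegative.) -/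
open Matrix
open scoped ComplexOrder

/-- If the generator `A` commutes with the postselection projector `F`, there is a joint
orthonormal eigenbasis in which the doubly extended Kirkwood–Dirac quasiprobability
distribution of any positive semidefinite `ρ` is real and nonnegative: the entry with
`j = k = l` equals `⟨v_j, ρ·v_j⟩` and all other entries vanish. -/
theorem kd_nonneg_of_commute
    {n : ℕ} (A F : Matrix (Fin n) (Fin n) ℂ)
    (hA : A.IsHermitian)
    (hFherm : F.IsHermitian) (hFproj : F * F = F)
    (hcomm : A * F = F * A) :
    ∃ (v : Fin n → (Fin n → ℂ)) (α : Fin n → ℝ),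
      (∀ j k, star (v j) ⬝ᵥ v k = if j = k then 1 else 0) ∧
      (∀ j, A.mulVec (v j) = (α j : ℂ) • v j) ∧
      (∀ j, F.mulVec (v j) = v j ∨ F.mulVec (v j) = 0) ∧
      (∀ ρ : Matrix (Fin n) (Fin n) ℂ, ρ.PosSemidef →
        ∀ j k l,
          (((star (v l) ⬝ᵥ v j) * (star (v j) ⬝ᵥ ρ.mulVec (v k))
              * (star (v k) ⬝ᵥ v l)).im = 0 ∧
            0 ≤ ((star (v l) ⬝ᵥ v j) * (star (v j) ⬝ᵥ ρ.mulVec (v k))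
              * (star (v k) ⬝ᵥ v l)).re) ∧
          (star (v l) ⬝ᵥ v j) * (star (v j) ⬝ᵥ ρ.mulVec (v k)) * (star (v k) ⬝ᵥ v l)
            = if j = k ∧ k = l then star (v j) ⬝ᵥ ρ.mulVec (v j) else 0) := by
  classical
  have hfin : {μ : ℂ | Module.End.HasEigenvalue (Matrix.toLin' A) μ}.Finite :=
    Module.End.finite_hasEigenvalue _
  obtain ⟨c, hc⟩ : ∃ c : ℝ, (c : ℂ) ∉ Set.image2 (fun a b : ℂ => a - b)
      {μ : ℂ | Module.End.HasEigenvalue (Matrix.toLin' A) μ}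
      {μ : ℂ | Module.End.HasEigenvalue (Matrix.toLin' A) μ} := by
    have h2 := (hfin.image2 (fun a b : ℂ => a - b) hfin).preimage
      (f := fun x : ℝ => (x : ℂ)) Complex.ofReal_injective.injOn
    obtain ⟨c, hc⟩ := h2.exists_notMem
    exact ⟨c, hc⟩
  have hM : (A + (c : ℂ) • F).IsHermitian := by
    unfold Matrix.IsHermitian at *
    rw [conjTranspose_add, conjTranspose_smul, hA, hFherm]
    simp
  have heig : ∀ (x : Fin n → ℂ) (μ : ℂ), x ≠ 0 → A *ᵥ x = μ • x →
      Module.End.HasEigenvalue (Matrix.toLin' A) μ := by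
    intro x μ hx h
    refine Module.End.hasEigenvalue_of_hasEigenvector (x := x) ⟨?_, hx⟩
    rw [Module.End.mem_eigenspace_iff]
    simpa using h
  let v : Fin n → (Fin n → ℂ) := fun j => (hM.eigenvectorBasis j).ofLp
  have hv : ∀ j, A *ᵥ v j + (c : ℂ) • F *ᵥ v j = (hM.eigenvalues j : ℂ) • v j := by
    intro j
    have := hM.mulVec_eigenvectorBasis j
    rw [add_mulVec, smul_mulVec] at this
    simpa using this
  have hFF : ∀ x : Fin n → ℂ, F *ᵥ (F *ᵥ x) = F *ᵥ x := by
    intro x; rw [mulVec_mulVec, hFproj]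
  have h1 : ∀ j, A *ᵥ (F *ᵥ v j) = ((hM.eigenvalues j : ℂ) - c) • (F *ᵥ v j) := by
    intro j
    have h := congrArg (fun x => F *ᵥ x) (hv j)
    simp only [mulVec_add, mulVec_smul, hFF] at h
    rw [mulVec_mulVec, hcomm, ← mulVec_mulVec, sub_smul, ← h]
    abel
  have h2 : ∀ j, A *ᵥ (v j - F *ᵥ v j) = (hM.eigenvalues j : ℂ) • (v j - F *ᵥ v j) := by
    intro j
    rw [mulVec_sub, h1, smul_sub, sub_smul, ← hv j]
    abel
  have hF : ∀ j, F *ᵥ v j = v j ∨ F *ᵥ v j = 0 := by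
    intro j
    by_contra! hcon
    obtain ⟨ha, hb⟩ := hcon
    refine hc ⟨_, heig _ _ (sub_ne_zero.2 ha.symm) (h2 j), _, heig _ _ hb (h1 j), ?_⟩
    simp
  have hon : ∀ j k, star (v j) ⬝ᵥ v k = if j = k then 1 else 0 := by
    intro j k
    have := orthonormal_iff_ite.1 hM.eigenvectorBasis.orthonormal j k
    rw [EuclideanSpace.inner_eq_star_dotProduct, dotProduct_comm] at this
    exact this
  refine ⟨v, fun j => if F *ᵥ v j = 0 then hM.eigenvalues j else hM.eigenvalues j - c,
    hon, ?_, hF, ?_⟩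
  · intro j
    by_cases h0 : F *ᵥ v j = 0
    · have := h2 j
      simp only [h0, sub_zero] at this
      simpa [h0] using this
    · have h3 := (hF j).resolve_right h0
      have := h1 j
      rw [h3] at this
      simpa [h0] using this
  · intro ρ hρ j k l
    have key : (star (v l) ⬝ᵥ v j) * (star (v j) ⬝ᵥ ρ.mulVec (v k)) * (star (v k) ⬝ᵥ v l)
            = if j = k ∧ k = l then star (v j) ⬝ᵥ ρ.mulVec (v j) else 0 := by
      rw [hon, hon]
      by_cases hkl : k = l
      · subst hkl
        by_cases hjk : j = k
        · subst hjk; simp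
        · simp [hjk, Ne.symm hjk]
      · simp [hkl]
    refine ⟨?_, key⟩
    rw [key]
    split_ifs
    · have := hρ.dotProduct_mulVec_nonneg (v j)
      rw [Complex.le_def] at this
      exact ⟨this.2.symm, this.1⟩
    · simp
end
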